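/- (Multi-dimensional version.) For every k, d, r ∈ ℕ with k, d, r ≥ 1 and every colouring c : FIN_{±k}^[d] → {0, …, r−1} there exist i < r and an infinite block sequence P ∈ FIN_{±k}^[∞] such that ⟨P⟩_{±k}^[d] ⊆ (c⁻¹{i})₁. -/

import Mathlib

open Function Set

/-- `p` is an element of `FIN_{±k}`: finitely supported, values in `{0, ±1, …, ±k}`,
attaining one of the values `±k`. -/
def IsFin (k : ℕ) (p : ℕ → ℤ) : Prop :=
  (Function.support p).Finite ∧ (∀ n, |p n| ≤ (k : ℤ)) ∧ (∃ n, |p n| = (k : ℤ))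

/-- `p < q` in the block ordering: every point of `supp p` precedes every point of `supp q`. -/
def BlockLt (p q : ℕ → ℤ) : Prop :=
  ∀ m n : ℕ, p m ≠ 0 → q n ≠ 0 → m < n

/-- The tetris operation `T`. -/
def tetris (p : ℕ → ℤ) : ℕ → ℤ := fun n =>
  if 0 < p n then p n - 1 else if p n < 0 then p n + 1 else 0

/-- The sign-flipped tetris operation `-T`. -/
def negT (p : ℕ → ℤ) : ℕ → ℤ := -(tetris p)

/-- The weak tetris operation `S`. -/
def Sop (p : ℕ → ℤ) : ℕ → ℤ := fun n => if |p n| = 1 then 0 else p n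

/-- `‖p‖ ≤ c` for the `ℓ∞` norm. -/
def normLe (p : ℕ → ℤ) (c : ℕ) : Prop := ∀ n, |p n| ≤ (c : ℤ)

/-- `(A)_c`, the `c`-fattening of `A`. -/
def approx (c : ℕ) (A : Set (ℕ → ℤ)) : Set (ℕ → ℤ) :=
  {p | ∃ q ∈ A, normLe (p - q) c}

/-- `P` is an infinite block sequence in `FIN_{±k}`. -/
def IsBlockSeq (k : ℕ) (P : ℕ → ℕ → ℤ) : Prop :=
  (∀ n, IsFin k (P n)) ∧ ∀ m n : ℕ, m < n → BlockLt (P m) (P n)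

/-- `t` is a finite block sequence in `FIN_{±k}` (coded as a list). -/
def IsFinBlockSeq (k : ℕ) (t : List (ℕ → ℤ)) : Prop :=
  (∀ p ∈ t, IsFin k p) ∧ t.Pairwise BlockLt

/-- `q ∈ ⟨P⟩_{±k}`: `q = ε₀T^{j₀}(p_{n₀}) + ⋯ + ε_m T^{j_m}(p_{n_m})` with `n₀ < ⋯ < n_m`,
`εᵢ ∈ {±1}`, `jᵢ < k` and `min jᵢ = 0`. -/
def InSpanPM (k : ℕ) (P : ℕ → ℕ → ℤ) (q : ℕ → ℤ) : Prop :=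
  ∃ (m : ℕ) (n : Fin (m + 1) → ℕ) (ε : Fin (m + 1) → ℤ) (j : Fin (m + 1) → ℕ),
    StrictMono n ∧ (∀ i, ε i = 1 ∨ ε i = -1) ∧ (∀ i, j i < k) ∧ (∃ i, j i = 0) ∧
    q = ∑ i, ε i • tetris^[j i] (P (n i))

/-- `q ∈ ⟨P⟩_{(−T)}`. -/
def InSpanNegT (k : ℕ) (P : ℕ → ℕ → ℤ) (q : ℕ → ℤ) : Prop :=
  ∃ (m : ℕ) (n : Fin (m + 1) → ℕ) (j : Fin (m + 1) → ℕ),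
    StrictMono n ∧ (∀ i, j i < k) ∧ (∃ i, j i = 0) ∧
    q = ∑ i, negT^[j i] (P (n i))

/-- `q ∈ ⟨p_a, …, p_b⟩_{(−T)}`. -/
def InSpanNegTRange (k : ℕ) (P : ℕ → ℕ → ℤ) (a b : ℕ) (q : ℕ → ℤ) : Prop :=
  ∃ (m : ℕ) (n : Fin (m + 1) → ℕ) (j : Fin (m + 1) → ℕ),
    StrictMono n ∧ (∀ i, a ≤ n i ∧ n i ≤ b) ∧ (∀ i, j i < k) ∧ (∃ i, j i = 0) ∧
    q = ∑ i, negT^[j i] (P (n i))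

/-- A cofinite ultrafilter on `FIN_{±k}` (coded as an ultrafilter on `ℕ → ℤ`
concentrating on `FIN_{±k}`). -/
def IsCofiniteUF (k : ℕ) (𝒰 : Ultrafilter (ℕ → ℤ)) : Prop :=
  {p | IsFin k p} ∈ 𝒰 ∧ ∀ m : ℕ, {p : ℕ → ℤ | ∀ n < m, p n = 0} ∈ 𝒰

/-- `A ∈ 𝒰 + 𝒱`. -/
def SumMem (𝒰 𝒱 : Ultrafilter (ℕ → ℤ)) (A : Set (ℕ → ℤ)) : Prop :=
  {p | {q | BlockLt p q ∧ p + q ∈ A} ∈ 𝒱} ∈ 𝒰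

/-- `𝒰` is subsymmetric: `A ∈ 𝒰` implies `−(A)₁ ∈ 𝒰`. -/
def IsSubsymmetric (𝒰 : Ultrafilter (ℕ → ℤ)) : Prop :=
  ∀ A ∈ 𝒰, {p : ℕ → ℤ | -p ∈ approx 1 A} ∈ 𝒰

/-- `𝒰 + (−T)^j 𝒰 = (−T)^j 𝒰 + 𝒰 = 𝒰` for all `j ≤ k`. -/
def IsIdempotentUF (k : ℕ) (𝒰 : Ultrafilter (ℕ → ℤ)) : Prop :=
  ∀ j ≤ k, ∀ A : Set (ℕ → ℤ),
    (SumMem 𝒰 (Ultrafilter.map (negT^[j]) 𝒰) A ↔ A ∈ 𝒰) ∧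
    (SumMem (Ultrafilter.map (negT^[j]) 𝒰) 𝒰 A ↔ A ∈ 𝒰)

/-- A cofinite subsymmetric ultrafilter on `FIN_{±k}` idempotent with respect to
all the maps `(−T)^j`, `j ≤ k`. -/
def IsGowersUF (k : ℕ) (𝒰 : Ultrafilter (ℕ → ℤ)) : Prop :=
  IsCofiniteUF k 𝒰 ∧ IsSubsymmetric 𝒰 ∧ IsIdempotentUF k 𝒰

/-- A `𝒰`-tree on `FIN_{±k}` with stem `s`. -/
structure IsUTree (k : ℕ) (𝒰 : Ultrafilter (ℕ → ℤ)) (U : Set (List (ℕ → ℤ)))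
    (s : List (ℕ → ℤ)) : Prop where
  blocks : ∀ t ∈ U, IsFinBlockSeq k t
  prefixClosed : ∀ t ∈ U, ∀ t' : List (ℕ → ℤ), t' <+: t → t' ∈ U
  stemMem : s ∈ U
  stemComparable : ∀ t ∈ U, s <+: t ∨ t <+: s
  branch : ∀ t ∈ U, s <+: t → {p | t ++ [p] ∈ U} ∈ 𝒰

/-- `[U]`, the set of infinite branches of a tree of finite block sequences. -/
def Branches (U : Set (List (ℕ → ℤ))) : Set (ℕ → ℕ → ℤ) :=
  {P | ∀ n : ℕ, (List.ofFn fun i : Fin n => P i.1) ∈ U}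

/-- The space `FIN_{±k}^[∞]` of infinite block sequences. -/
def BlockSeq (k : ℕ) : Type := {P : ℕ → ℕ → ℤ // IsBlockSeq k P}

/-- The metrizable topology on `FIN_{±k}^[∞]`, generated by the basic sets `[s]`. -/
instance BlockSeq.topology (k : ℕ) : TopologicalSpace (BlockSeq k) :=
  TopologicalSpace.generateFrom
    {O | ∃ s : List (ℕ → ℤ),
      O = {P : BlockSeq k | ∀ i : Fin s.length, P.1 i.1 = s.get i}}

/-- The Souslin operation applied to a Souslin scheme. -/
def SouslinOp {α : Type*} (F : List ℕ → Set α) : Set α :=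
  ⋃ x : ℕ → ℕ, ⋂ n : ℕ, F (List.ofFn fun i : Fin n => x i.1)

/-- `A` is Souslin measurable: it belongs to every field of sets containing the open
sets and closed under the Souslin operation. -/
def SouslinMeasurable {α : Type*} [TopologicalSpace α] (A : Set α) : Prop :=
  ∀ 𝓕 : Set (Set α),
    (∀ O : Set α, IsOpen O → O ∈ 𝓕) →
    (∀ B ∈ 𝓕, Bᶜ ∈ 𝓕) →
    (∀ B ∈ 𝓕, ∀ C ∈ 𝓕, B ∪ C ∈ 𝓕) →
    (∀ F : List ℕ → Set α, (∀ s, F s ∈ 𝓕) → SouslinOp F ∈ 𝓕) →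
    A ∈ 𝓕

/-- The map `Φ_m : FIN_{±2m} → FIN_{±m}` (its defining formula does not depend on `m`). -/
def Phi (p : ℕ → ℤ) : ℕ → ℤ := fun n =>
  if p n % 2 = 0 then p n / 2
  else if 0 < p n then (p n - 1) / 2
  else (p n + 1) / 2

/-- `Ψ = Φ_k ∘ Φ_{2k} : FIN_{±4k} → FIN_{±k}`. -/
def Psi (p : ℕ → ℤ) : ℕ → ℤ := Phi (Phi p)

/-- `Q` is a block sequence in `FIN_{±k}` of length `d`. -/
def IsBlockSeqFin (k d : ℕ) (Q : Fin d → ℕ → ℤ) : Prop :=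
  (∀ n, IsFin k (Q n)) ∧ ∀ m n : Fin d, m < n → BlockLt (Q m) (Q n)


open Filter

attribute [local instance] Ultrafilter.add Ultrafilter.addSemigroup

lemma tetris_zero_at {p : ℕ → ℤ} {n : ℕ} (h : p n = 0) : tetris p n = 0 := by
  simp [tetris, h]

lemma negT_zero_at {p : ℕ → ℤ} {n : ℕ} (h : p n = 0) : negT p n = 0 := by
  simp [negT, tetris, h]

lemma negT_iter_zero_at {p : ℕ → ℤ} {n : ℕ} (h : p n = 0) (j : ℕ) : negT^[j] p n = 0 := by
  induction j with
  | zero => simpa using h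
  | succ j ih => rw [Function.iterate_succ_apply']; exact negT_zero_at ih

lemma BlockLt.zero_or {p q : ℕ → ℤ} (h : BlockLt p q) (n : ℕ) : p n = 0 ∨ q n = 0 := by
  by_contra! hh
  exact lt_irrefl _ (h n n hh.1 hh.2)

lemma cof_blockLt {l : ℕ} {V : Ultrafilter (ℕ → ℤ)} (hV : IsCofiniteUF l V) {p : ℕ → ℤ}
    (hp : (Function.support p).Finite) : ∀ᶠ q in (V : Filter (ℕ → ℤ)), BlockLt p q := by
  obtain ⟨b, hb⟩ := hp.bddAbove
  have h : ∀ᶠ q in (V : Filter (ℕ → ℤ)), ∀ n < b + 1, q n = 0 := hV.2 (b + 1)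
  filter_upwards [h] with q hq m n hm hn
  have h1 : m ≤ b := hb hm
  by_contra hlt
  exact hn (hq n (by omega))

lemma cof_isFin {l : ℕ} {V : Ultrafilter (ℕ → ℤ)} (hV : IsCofiniteUF l V) :
    ∀ᶠ q in (V : Filter (ℕ → ℤ)), IsFin l q := hV.1

lemma cof_far {l : ℕ} {V : Ultrafilter (ℕ → ℤ)} (hV : IsCofiniteUF l V) (m : ℕ) :
    ∀ᶠ q in (V : Filter (ℕ → ℤ)), ∀ n < m, q n = 0 := hV.2 m

lemma isFin_add {l m : ℕ} {p q : ℕ → ℤ} (hp : IsFin l p) (hq : IsFin m q) (h : BlockLt p q) :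
    IsFin (max l m) (p + q) := by
  refine ⟨(hp.1.union hq.1).subset (Function.support_add p q), fun n => ?_, ?_⟩
  · have h1 := hp.2.1 n
    have h2 := hq.2.1 n
    push_cast
    rcases h.zero_or n with h0 | h0 <;> simp [h0, h1, h2]
  · rcases le_total l m with hlm | hlm
    · obtain ⟨n, hn⟩ := hq.2.2
      rcases h.zero_or n with h0 | h0
      · exact ⟨n, by simp [h0, hn, hlm]⟩
      · obtain ⟨n', hn'⟩ := hp.2.2
        rw [h0] at hn
        simp at hn
        have : l = m := by omega
        subst this
        obtain rfl : l = 0 := by omega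
        exact ⟨n, by have := hp.2.1 n; simp [h0]; simpa using this⟩
    · obtain ⟨n, hn⟩ := hp.2.2
      rcases h.zero_or n with h0 | h0
      · rw [h0] at hn
        simp at hn
        have : l = m := by omega
        subst this
        obtain rfl : l = 0 := by omega
        exact ⟨n, by have := hq.2.1 n; simp [h0]; simpa using this⟩
      · exact ⟨n, by simp [h0, hn, hlm]⟩

lemma cof_add {l m : ℕ} {U V : Ultrafilter (ℕ → ℤ)} (hU : IsCofiniteUF l U)
    (hV : IsCofiniteUF m V) : IsCofiniteUF (max l m) (U + V) := by
  constructor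
  · change ∀ᶠ p in ((U + V : Ultrafilter (ℕ → ℤ)) : Filter (ℕ → ℤ)), IsFin (max l m) p
    rw [Ultrafilter.eventually_add]
    filter_upwards [cof_isFin hU] with p hp
    filter_upwards [cof_isFin hV, cof_blockLt hV hp.1] with q hq hpq
    exact isFin_add hp hq hpq
  · intro b
    change ∀ᶠ p in ((U + V : Ultrafilter (ℕ → ℤ)) : Filter (ℕ → ℤ)), ∀ n < b, p n = 0
    rw [Ultrafilter.eventually_add]
    filter_upwards [cof_far hU b] with p hp
    filter_upwards [cof_far hV b] with q hq n hn
    simp [hp n hn, hq n hn]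

lemma negT_add {p q : ℕ → ℤ} (h : BlockLt p q) : negT (p + q) = negT p + negT q := by
  funext n
  rcases h.zero_or n with h0 | h0 <;> simp [negT, tetris, h0]

lemma map_negT_add {l m : ℕ} {U V : Ultrafilter (ℕ → ℤ)} (hU : IsCofiniteUF l U)
    (hV : IsCofiniteUF m V) :
    Ultrafilter.map negT (U + V) = Ultrafilter.map negT U + Ultrafilter.map negT V := by
  apply Ultrafilter.coe_inj.mp
  apply Filter.ext'
  intro P
  rw [Ultrafilter.eventually_add]
  simp only [Ultrafilter.coe_map, Filter.eventually_map]
  rw [Ultrafilter.eventually_add]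
  apply Filter.eventually_congr
  filter_upwards [cof_isFin hU] with p hp
  apply Filter.eventually_congr
  filter_upwards [cof_blockLt hV hp.1] with q hq
  rw [negT_add hq]

/-- lifting through `negT` -/
def liftT (q : ℕ → ℤ) : ℕ → ℤ := fun n =>
  if 0 < q n then -(q n) - 1 else if q n < 0 then -(q n) + 1 else 0

lemma negT_liftT (q : ℕ → ℤ) : negT (liftT q) = q := by
  funext n
  simp only [negT, tetris, liftT, Pi.neg_apply]
  split_ifs <;> omega

lemma isFin_liftT {l : ℕ} (hl : 1 ≤ l) {q : ℕ → ℤ} (hq : IsFin l q) :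
    IsFin (l + 1) (liftT q) := by
  refine ⟨hq.1.subset ?_, fun n => ?_, ?_⟩
  · intro n hn
    simp only [Function.mem_support] at hn ⊢
    intro h0
    simp [liftT, h0] at hn
  · have := hq.2.1 n
    rw [abs_le] at this ⊢
    simp only [liftT]
    push_cast
    split_ifs <;> omega
  · obtain ⟨n, hn⟩ := hq.2.2
    refine ⟨n, ?_⟩
    simp only [liftT]
    push_cast
    rcases abs_cases (q n) with h | h <;> split_ifs <;> grind

lemma isFin_single (n : ℕ) : IsFin 1 (Pi.single n 1) := by
  refine ⟨(Set.finite_singleton n).subset Pi.support_single_subset, fun m => ?_, n, by simp⟩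
  by_cases h : m = n
  · subst h; simp
  · simp [h]

lemma negT_single (n : ℕ) : negT (Pi.single n 1) = 0 := by
  funext m
  by_cases h : m = n
  · subst h; simp [negT, tetris]
  · simp [negT, tetris, h]

lemma exists_lift {l : ℕ} {U : Ultrafilter (ℕ → ℤ)} (hU : IsCofiniteUF l U) :
    ∃ X, IsCofiniteUF (l + 1) X ∧ Ultrafilter.map negT X = U := by
  rcases Nat.eq_zero_or_pos l with rfl | hl
  · refine ⟨Ultrafilter.map (fun n : ℕ => (Pi.single n 1 : ℕ → ℤ)) (hyperfilter ℕ), ⟨?_, ?_⟩, ?_⟩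
    · change ∀ᶠ n in (hyperfilter ℕ : Filter ℕ), IsFin (0 + 1) (Pi.single n 1)
      exact Filter.Eventually.of_forall isFin_single
    · intro m
      change ∀ᶠ n in (hyperfilter ℕ : Filter ℕ), ∀ i < m, (Pi.single n 1 : ℕ → ℤ) i = 0
      filter_upwards [Nat.hyperfilter_le_atTop (Filter.eventually_ge_atTop m)] with n hn i hi
      have : m ≤ n := hn
      rw [Pi.single_eq_of_ne]
      omega
    · rw [Ultrafilter.map_map]
      apply Ultrafilter.coe_inj.mp
      apply Filter.ext'
      intro P
      have h1 : ∀ᶠ q in (U : Filter (ℕ → ℤ)), q = 0 := by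
        filter_upwards [cof_isFin hU] with q hq
        funext n
        have := hq.2.1 n
        simpa using this
      have h2 : (∀ᶠ q in (U : Filter (ℕ → ℤ)), P q) ↔ P 0 := by
        rw [← Filter.eventually_const (f := (U : Filter (ℕ → ℤ))) (p := P 0)]
        apply Filter.eventually_congr
        filter_upwards [h1] with q hq
        rw [hq]
      rw [h2]
      simp only [Ultrafilter.coe_map, Filter.eventually_map, Function.comp, negT_single]
      exact Filter.eventually_const
  · refine ⟨Ultrafilter.map liftT U, ⟨?_, ?_⟩, ?_⟩
    · change ∀ᶠ q in (U : Filter (ℕ → ℤ)), IsFin (l + 1) (liftT q)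
      filter_upwards [cof_isFin hU] with q hq
      exact isFin_liftT hl hq
    · intro m
      change ∀ᶠ q in (U : Filter (ℕ → ℤ)), ∀ i < m, liftT q i = 0
      filter_upwards [cof_far hU m] with q hq i hi
      simp [liftT, hq i hi]
    · rw [Ultrafilter.map_map]
      have : negT ∘ liftT = id := funext negT_liftT
      rw [this, Ultrafilter.map_id]

lemma isClosed_lifts (l : ℕ) (U : Ultrafilter (ℕ → ℤ)) :
    IsClosed {X | IsCofiniteUF l X ∧ Ultrafilter.map negT X = U} := by
  have : {X | IsCofiniteUF l X ∧ Ultrafilter.map negT X = U} =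
      ({X : Ultrafilter (ℕ → ℤ) | {p | IsFin l p} ∈ X} ∩
        ⋂ m : ℕ, {X : Ultrafilter (ℕ → ℤ) | {p : ℕ → ℤ | ∀ n < m, p n = 0} ∈ X}) ∩
      ⋂ A : {A // A ∈ U}, {X : Ultrafilter (ℕ → ℤ) | negT ⁻¹' A.1 ∈ X} := by
    ext X
    simp only [Set.mem_inter_iff, Set.mem_iInter]
    refine and_congr ?_ ?_
    · exact Iff.rfl
    · constructor
      · rintro h ⟨A, hA⟩
        rw [← h] at hA
        exact hA
      · intro h
        apply Ultrafilter.coe_inj.mp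
        refine Ultrafilter.unique _ ?_
        intro A hA
        exact h ⟨A, hA⟩
  rw [this]
  refine IsClosed.inter (IsClosed.inter (ultrafilter_isClosed_basic _)
    (isClosed_iInter fun m => ultrafilter_isClosed_basic _))
    (isClosed_iInter fun A => ultrafilter_isClosed_basic _)

lemma gowers_step {l : ℕ} {U : Ultrafilter (ℕ → ℤ)} (hU : IsCofiniteUF l U) (h0 : U + U = U)
    (h1 : U + Ultrafilter.map negT U = U) (h2 : Ultrafilter.map negT U + U = U) :
    ∃ W, IsCofiniteUF (l + 1) W ∧ Ultrafilter.map negT W = U ∧ W + W = W ∧ U + W = W ∧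
      W + U = W := by
  set S : Set (Ultrafilter (ℕ → ℤ)) :=
    {X | IsCofiniteUF (l + 1) X ∧ Ultrafilter.map negT X = U} with hS
  have hSadd : ∀ X ∈ S, X + U ∈ S := by
    rintro X ⟨hX, hXU⟩
    refine ⟨by simpa using cof_add hX hU, ?_⟩
    rw [map_negT_add hX hU, hXU, h1]
  have hSadd2 : ∀ X ∈ S, ∀ Y ∈ S, X + Y ∈ S := by
    rintro X ⟨hX, hXU⟩ Y ⟨hY, hYU⟩
    refine ⟨by simpa using cof_add hX hY, ?_⟩
    rw [map_negT_add hX hY, hXU, hYU, h0]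
  obtain ⟨W, ⟨X, hX, rfl⟩, hW⟩ := exists_idempotent_in_compact_add_subsemigroup
    (M := Ultrafilter (ℕ → ℤ)) Ultrafilter.continuous_add_left ((· + U) '' S)
    (Set.Nonempty.image _ (exists_lift hU : S.Nonempty))
    ((isClosed_lifts _ _).isCompact.image (Ultrafilter.continuous_add_left U))
    (by
      rintro _ ⟨X, hX, rfl⟩ _ ⟨Y, hY, rfl⟩
      exact ⟨X + U + Y, hSadd2 _ (hSadd _ hX) _ hY, add_assoc _ _ _⟩)
  simp only at hW
  have hXU := hSadd X hX
  have hWU : (X + U) + U = X + U := by rw [add_assoc, h0]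
  refine ⟨U + (X + U), by simpa using cof_add hU hXU.1, ?_, ?_, ?_, ?_⟩
  · rw [map_negT_add hU hXU.1, hXU.2, h2]
  · calc U + (X + U) + (U + (X + U)) = U + (((X + U) + U) + (X + U)) := by simp only [add_assoc]
      _ = U + (X + U) := by rw [hWU, hW]
  · rw [← add_assoc, h0]
  · rw [add_assoc, hWU]

lemma exists_gowersUF (k : ℕ) : ∃ U : Ultrafilter (ℕ → ℤ), IsCofiniteUF k U ∧
    ∀ i j : ℕ, Ultrafilter.map negT^[i] U + Ultrafilter.map negT^[j] U =
      Ultrafilter.map negT^[min i j] U := by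
  induction k with
  | zero =>
    have hz : ∀ i, negT^[i] (0 : ℕ → ℤ) = 0 := fun i =>
      funext fun n => negT_iter_zero_at (p := 0) (n := n) rfl i
    refine ⟨pure 0, ⟨?_, fun m => ?_⟩, fun i j => ?_⟩
    · change IsFin 0 0
      exact ⟨by simp, by simp, 0, by simp⟩
    · change ∀ n < m, (0 : ℕ → ℤ) n = 0
      simp
    · simp only [Ultrafilter.map_pure, hz]
      apply Ultrafilter.coe_inj.mp
      apply Filter.ext'
      intro P
      rw [Ultrafilter.eventually_add]
      simp
  | succ k ih =>
    obtain ⟨U, hU, h⟩ := ih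
    have hid : Ultrafilter.map negT^[0] U = U := by
      rw [Function.iterate_zero, Ultrafilter.map_id]
    have h0 := h 0 0
    have h1 := h 0 1
    have h2 := h 1 0
    simp only [hid, Function.iterate_one, Nat.zero_min, Nat.min_zero] at h0 h1 h2
    obtain ⟨W, hW, hWU, a, b, c⟩ := gowers_step hU h0 h1 h2
    have hsucc : ∀ i, Ultrafilter.map negT^[i + 1] W = Ultrafilter.map negT^[i] U := by
      intro i
      rw [Function.iterate_succ, ← Ultrafilter.map_map, hWU]
    have hidW : Ultrafilter.map negT^[0] W = W := by
      rw [Function.iterate_zero, Ultrafilter.map_id]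
    refine ⟨W, hW, fun i j => ?_⟩
    rcases i with _ | i <;> rcases j with _ | j
    · simp only [hidW, a, Nat.min_self]
    · rw [hsucc, Nat.zero_min, hidW]
      nth_rw 1 [← c]
      have := h 0 j
      rw [hid, Nat.zero_min, hid] at this
      rw [add_assoc, this, c]
    · rw [hsucc, Nat.min_zero, hidW]
      nth_rw 1 [← b]
      have := h i 0
      rw [hid, Nat.min_zero, hid] at this
      rw [← add_assoc, this, b]
    · rw [hsucc, hsucc, h, Nat.succ_min_succ, hsucc]

lemma exists_gowersUF' (k : ℕ) : ∃ U : Ultrafilter (ℕ → ℤ), IsCofiniteUF k U ∧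
    ∀ (i j : ℕ) (P : (ℕ → ℤ) → Prop),
      (∀ᶠ x in (U : Filter (ℕ → ℤ)), ∀ᶠ y in (U : Filter (ℕ → ℤ)), P (negT^[i] x + negT^[j] y)) ↔
        ∀ᶠ x in (U : Filter (ℕ → ℤ)), P (negT^[min i j] x) := by
  obtain ⟨U, hU, h⟩ := exists_gowersUF k
  refine ⟨U, hU, fun i j P => ?_⟩
  have h1 : (∀ᶠ x in ((Ultrafilter.map negT^[i] U + Ultrafilter.map negT^[j] U :
      Ultrafilter (ℕ → ℤ)) : Filter (ℕ → ℤ)), P x) ↔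
      ∀ᶠ x in ((Ultrafilter.map negT^[min i j] U : Ultrafilter (ℕ → ℤ)) : Filter (ℕ → ℤ)), P x := by
    rw [h i j]
  rw [Ultrafilter.eventually_add] at h1
  simpa only [Ultrafilter.coe_map, Filter.eventually_map] using h1

section UF

variable {k : ℕ} {U : Ultrafilter (ℕ → ℤ)}

/-- The idempotence property used below. -/
def Idem (U : Ultrafilter (ℕ → ℤ)) : Prop :=
  ∀ (i j : ℕ) (P : (ℕ → ℤ) → Prop),
      (∀ᶠ x in (U : Filter (ℕ → ℤ)), ∀ᶠ y in (U : Filter (ℕ → ℤ)), P (negT^[i] x + negT^[j] y)) ↔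
        ∀ᶠ x in (U : Filter (ℕ → ℤ)), P (negT^[min i j] x)

lemma subsym (hU : IsCofiniteUF k U) (hI : Idem U) {P : (ℕ → ℤ) → Prop}
    (hP : ∀ᶠ x in (U : Filter (ℕ → ℤ)), P x) :
    ∀ᶠ x in (U : Filter (ℕ → ℤ)), ∃ y, P y ∧ normLe (x + y) 1 := by
  have h1 := (hI 1 0 P).2 (by simpa using hP)
  have h2 := (hI 0 1 (fun x => ∃ y, P y ∧ normLe (x + y) 1)).1 ?_
  · simpa using h2
  filter_upwards [h1, cof_isFin hU] with x hx hxf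
  filter_upwards [hx, cof_blockLt hU hxf.1] with y hy hxy
  refine ⟨_, hy, fun n => ?_⟩
  simp only [Function.iterate_one, Function.iterate_zero, id, Pi.add_apply, negT, tetris,
    Pi.neg_apply]
  rw [abs_le]
  push_cast
  rcases hxy.zero_or n with h0 | h0 <;> rw [h0] <;> split_ifs <;> omega

abbrev St := Bool × ℕ × List (ℕ → ℤ) × (ℕ → ℤ)

/-- Good partial states. -/
def Good (k : ℕ) (U : Ultrafilter (ℕ → ℤ)) (G : ℕ → List (ℕ → ℤ) → Prop) : St → Prop
  | (false, n, t, s) => ∀ᶠ x in (U : Filter (ℕ → ℤ)), G n (t ++ [s + x])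
  | (true, n, t, s) => G n (t ++ [s]) ∧
      ∀ j : Fin k, ∀ᶠ x in (U : Filter (ℕ → ℤ)), G n (t ++ [s + negT^[j.1] x])

/-- Add one more piece to the current sum. -/
def stepAdd (st : St) (j : ℕ) (z : ℕ → ℤ) : St :=
  (st.1 || decide (j = 0), st.2.1, st.2.2.1, st.2.2.2 + negT^[j] z)

/-- Close the current sum, when possible. -/
def closeSt : St → St
  | (true, n + 1, t, s) => (false, n, t ++ [s], 0)
  | st => st

/-- One step of the automaton. -/
def stepSt (st : St) (j : ℕ) (c : Bool) (z : ℕ → ℤ) : St :=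
  if c then closeSt (stepAdd st j z) else stepAdd st j z

variable {G : ℕ → List (ℕ → ℤ) → Prop}

lemma good_stepAdd (hI : Idem U) {st : St} (h : Good k U G st) (j : Fin k) :
    ∀ᶠ z in (U : Filter (ℕ → ℤ)), Good k U G (stepAdd st j.1 z) := by
  obtain ⟨f, n, t, s⟩ := st
  cases f with
  | false =>
    change ∀ᶠ x in (U : Filter (ℕ → ℤ)), G n (t ++ [s + x]) at h
    by_cases hj : j.1 = 0
    · simp only [stepAdd, hj, decide_true, Bool.or_true, Function.iterate_zero, id, Good]
      refine h.and (Filter.eventually_all.2 fun i => ?_)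
      have := (hI 0 i.1 (fun x => G n (t ++ [s + x]))).2 (by simpa using h)
      simpa [add_assoc] using this
    · simp only [stepAdd, hj, decide_false, Bool.or_false, Good]
      have := (hI j.1 0 (fun x => G n (t ++ [s + x]))).2 (by simpa using h)
      simpa [add_assoc] using this
  | true =>
    obtain ⟨h1, h2⟩ := h
    simp only [stepAdd, Bool.true_or, Good]
    refine (h2 j).and (Filter.eventually_all.2 fun i => ?_)
    have h3 : ∀ᶠ x in (U : Filter (ℕ → ℤ)), G n (t ++ [s + negT^[min j.1 i.1] x]) := by
      rcases min_choice j.1 i.1 with h | h <;> rw [h]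
      · exact h2 j
      · exact h2 i
    have := (hI j.1 i.1 (fun x => G n (t ++ [s + x]))).2 h3
    simpa [add_assoc] using this

lemma good_close (hG : ∀ n t, G (n + 1) t → ∀ᶠ q in (U : Filter (ℕ → ℤ)), G n (t ++ [q]))
    {st : St} (h : Good k U G st) : Good k U G (closeSt st) := by
  obtain ⟨f, n, t, s⟩ := st
  cases f with
  | false => exact h
  | true =>
    cases n with
    | zero => exact h
    | succ n =>
      have := hG _ _ h.1
      simpa [closeSt, Good] using this

lemma good_step (hI : Idem U)
    (hG : ∀ n t, G (n + 1) t → ∀ᶠ q in (U : Filter (ℕ → ℤ)), G n (t ++ [q]))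
    {st : St} (h : Good k U G st) (j : Fin k) (c : Bool) :
    ∀ᶠ z in (U : Filter (ℕ → ℤ)), Good k U G (stepSt st j.1 c z) := by
  filter_upwards [good_stepAdd hI h j] with z hz
  unfold stepSt
  split_ifs
  · exact good_close hG hz
  · exact hz

/-- Nodes: a pair of vectors, and a finite set of good states. -/
structure Node where
  p : ℕ → ℤ
  p' : ℕ → ℤ
  S : Set St

lemma exists_nodes (hU : IsCofiniteUF k U) (hI : Idem U)
    (hG : ∀ n t, G (n + 1) t → ∀ᶠ q in (U : Filter (ℕ → ℤ)), G n (t ++ [q]))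
    (st0 : St) (h0 : Good k U G st0) :
    ∃ f : ℕ → Node,
      (∀ n, IsFin k (f n).p ∧ IsFin k (f n).p' ∧ normLe ((f n).p + (f n).p') 1 ∧ st0 ∈ (f n).S ∧
        ∀ st ∈ (f n).S, Good k U G st) ∧
      ∀ m n, m < n →
        (∀ z, (z = (f n).p ∨ z = (f n).p') →
          BlockLt (f m).p z ∧ BlockLt (f m).p' z ∧
          ∀ st ∈ (f m).S, ∀ (j : Fin k) (c : Bool), stepSt st j.1 c z ∈ (f n).S) := by
  have key := exists_seq_of_forall_finset_exists
    (P := fun a : Node => IsFin k a.p ∧ IsFin k a.p' ∧ normLe (a.p + a.p') 1 ∧ st0 ∈ a.S ∧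
        (∀ st ∈ a.S, Good k U G st) ∧ a.S.Finite)
    (r := fun a b : Node => ∀ z, (z = b.p ∨ z = b.p') →
          BlockLt a.p z ∧ BlockLt a.p' z ∧
          ∀ st ∈ a.S, ∀ (j : Fin k) (c : Bool), stepSt st j.1 c z ∈ b.S) ?_
  · obtain ⟨f, hf, hr⟩ := key
    refine ⟨f, fun n => ?_, hr⟩
    obtain ⟨a, b, c, d, e, _⟩ := hf n
    exact ⟨a, b, c, d, e⟩
  intro F hF
  have hB : ∀ᶠ z in (U : Filter (ℕ → ℤ)), IsFin k z ∧ ∀ a ∈ F, BlockLt a.p z ∧ BlockLt a.p' z ∧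
      ∀ st ∈ a.S, ∀ (j : Fin k) (c : Bool), Good k U G (stepSt st j.1 c z) := by
    refine (cof_isFin hU).and ?_
    rw [Filter.eventually_all_finset]
    intro a ha
    obtain ⟨h1, h2, -, -, h3, h4⟩ := hF a ha
    refine (cof_blockLt hU h1.1).and ((cof_blockLt hU h2.1).and ?_)
    rw [Filter.eventually_all_finite h4]
    intro st hst
    rw [Filter.eventually_all]
    intro j
    rw [Filter.eventually_all]
    intro c
    exact good_step hI hG (h3 st hst) j c
  obtain ⟨x, hx, y, hy, hxy⟩ := (hB.and (subsym hU hI hB)).exists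
  refine ⟨⟨x, y, {st0} ∪ ⋃ z ∈ ({x, y} : Set (ℕ → ℤ)), ⋃ a ∈ F, ⋃ jc : Fin k × Bool,
    (fun st => stepSt st jc.1.1 jc.2 z) '' a.S⟩, ⟨hx.1, hy.1, hxy, Or.inl rfl, ?_, ?_⟩, ?_⟩
  · rintro st (hst | hst)
    · rw [Set.mem_singleton_iff.1 hst]; exact h0
    · simp only [Set.mem_iUnion] at hst
      obtain ⟨z, hz, a, ha, jc, st', hst', rfl⟩ := hst
      rcases hz with rfl | rfl
      · exact (hx.2 a ha).2.2 st' hst' _ _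
      · exact (hy.2 a ha).2.2 st' hst' _ _
  · refine (Set.finite_singleton _).union ?_
    refine Set.Finite.biUnion (by simp) fun z _ => ?_
    refine Set.Finite.biUnion F.finite_toSet fun a ha => ?_
    exact Set.finite_iUnion fun jc => ((hF a ha).2.2.2.2.2).image _
  · intro a ha z hz
    have hz' : z ∈ ({x, y} : Set (ℕ → ℤ)) := hz
    have hzB : BlockLt a.p z ∧ BlockLt a.p' z := by
      rcases hz' with rfl | rfl
      · exact ⟨(hx.2 a ha).1, (hx.2 a ha).2.1⟩
      · exact ⟨(hy.2 a ha).1, (hy.2 a ha).2.1⟩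
    refine ⟨hzB.1, hzB.2, fun st hst j c => Or.inr ?_⟩
    simp only [Set.mem_iUnion]
    exact ⟨z, hz', a, ha, (j, c), st, hst, rfl⟩

lemma run_block (f : ℕ → Node)
    (hf : ∀ m n, m < n → ∀ z, (z = (f n).p ∨ z = (f n).p') →
      ∀ st ∈ (f m).S, ∀ (j : Fin k) (c : Bool), stepSt st j.1 c z ∈ (f n).S)
    (n : ℕ) (t : List (ℕ → ℤ)) (m : ℕ) :
    ∀ (idx : Fin (m + 1) → ℕ) (j : Fin (m + 1) → ℕ) (z : Fin (m + 1) → ℕ → ℤ)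
      (M : ℕ) (fl : Bool) (s : ℕ → ℤ), StrictMono idx → M < idx 0 → (∀ i, j i < k) →
      (∀ i, z i = (f (idx i)).p ∨ z i = (f (idx i)).p') → (fl = true ∨ ∃ i, j i = 0) →
      (fl, n, t, s) ∈ (f M).S →
      (true, n, t, s + ∑ i, negT^[j i] (z i)) ∈ (f (idx (Fin.last m))).S ∧
      ∀ n', n = n' + 1 →
        (false, n', t ++ [s + ∑ i, negT^[j i] (z i)], 0) ∈ (f (idx (Fin.last m))).S := by
  induction m with
  | zero =>
    intro idx j z M fl s hidx hM hj hz h0 hs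
    have hfl : (fl || decide (j 0 = 0)) = true := by
      rcases h0 with h | ⟨i, hi⟩
      · simp [h]
      · obtain rfl : i = 0 := Fin.ext (by omega)
        simp [hi]
    have h1 := hf M _ hM (z 0) (hz 0) _ hs ⟨j 0, hj 0⟩ false
    have h2 := hf M _ hM (z 0) (hz 0) _ hs ⟨j 0, hj 0⟩ true
    simp only [stepSt, stepAdd, hfl] at h1 h2
    simp only [Nat.reduceAdd, Fin.last_zero, Fin.isValue, Finset.univ_unique]
    constructor
    · simpa using h1
    · rintro n' rfl
      simpa [closeSt] using h2
  | succ m ih =>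
    intro idx j z M fl s hidx hM hj hz h0 hs
    have h1 := hf M _ hM (z 0) (hz 0) _ hs ⟨j 0, hj 0⟩ false
    simp only [stepSt, stepAdd] at h1
    have h2 := ih (fun i => idx i.succ) (fun i => j i.succ) (fun i => z i.succ) (idx 0)
      (fl || decide (j 0 = 0)) (s + negT^[j 0] (z 0))
      (fun a b hab => hidx (Fin.succ_lt_succ_iff.2 hab)) (hidx (Fin.succ_pos 0))
      (fun i => hj _) (fun i => hz _) ?_ (by simpa using h1)
    · rw [Fin.sum_univ_succ, ← add_assoc]
      simpa using h2
    · rcases h0 with h | ⟨i, hi⟩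
      · left; simp [h]
      · rcases Fin.eq_zero_or_eq_succ i with rfl | ⟨i, rfl⟩
        · left; simp [hi]
        · right; exact ⟨i, hi⟩

end UF

lemma exists_colour (U : Ultrafilter (ℕ → ℤ)) {r : ℕ} (g : (ℕ → ℤ) → Fin r) :
    ∃ i, ∀ᶠ q in (U : Filter (ℕ → ℤ)), g q = i := by
  obtain ⟨i, hi⟩ := Ultrafilter.eq_pure_of_finite (U.map g)
  refine ⟨i, ?_⟩
  have : ∀ᶠ x in ((U.map g : Ultrafilter (Fin r)) : Filter (Fin r)), x = i := by
    rw [hi]; simp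
  simpa only [Ultrafilter.coe_map, Filter.eventually_map] using this

/-- The generic colour of a finite sequence with `n` further terms to be chosen. -/
noncomputable def colr (U : Ultrafilter (ℕ → ℤ)) {r : ℕ} (X : List (ℕ → ℤ) → Fin r) :
    ℕ → List (ℕ → ℤ) → Fin r
  | 0, t => X t
  | n + 1, t => (exists_colour U (fun q => colr U X n (t ++ [q]))).choose

lemma colr_succ (U : Ultrafilter (ℕ → ℤ)) {r : ℕ} (X : List (ℕ → ℤ) → Fin r) (n : ℕ)
    (t : List (ℕ → ℤ)) :
    ∀ᶠ q in (U : Filter (ℕ → ℤ)), colr U X n (t ++ [q]) = colr U X (n + 1) t :=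
  (exists_colour U (fun q => colr U X n (t ++ [q]))).choose_spec

lemma finBlockSeq_snoc {k : ℕ} {U : Ultrafilter (ℕ → ℤ)} (hU : IsCofiniteUF k U)
    {t : List (ℕ → ℤ)} (ht : IsFinBlockSeq k t) :
    ∀ᶠ q in (U : Filter (ℕ → ℤ)), IsFinBlockSeq k (t ++ [q]) := by
  have h1 : ∀ᶠ q in (U : Filter (ℕ → ℤ)), ∀ p ∈ {p | p ∈ t}, BlockLt p q := by
    rw [Filter.eventually_all_finite (List.finite_toSet t)]
    intro p hp
    exact cof_blockLt hU (ht.1 p hp).1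
  filter_upwards [h1, cof_isFin hU] with q hq hqf
  constructor
  · intro p hp
    rcases List.mem_append.1 hp with h | h
    · exact ht.1 p h
    · rw [List.mem_singleton.1 h]; exact hqf
  · rw [List.pairwise_append]
    refine ⟨ht.2, by simp, fun a ha b hb => ?_⟩
    rw [List.mem_singleton.1 hb]
    exact hq a ha

lemma tetris_neg (p : ℕ → ℤ) : tetris (-p) = -tetris p := by
  funext n
  simp only [tetris, Pi.neg_apply]
  split_ifs <;> omega

lemma negT_neg (p : ℕ → ℤ) : negT (-p) = -negT p := by
  simp [negT, tetris_neg]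

lemma negT_iter_neg (j : ℕ) (p : ℕ → ℤ) : negT^[j] (-p) = -negT^[j] p := by
  induction j generalizing p with
  | zero => rfl
  | succ j ih => rw [Function.iterate_succ_apply, negT_neg, ih, Function.iterate_succ_apply]

lemma tetris_iter_eq (j : ℕ) (p : ℕ → ℤ) :
    tetris^[j] p = negT^[j] p ∨ tetris^[j] p = -negT^[j] p := by
  induction j with
  | zero => left; rfl
  | succ j ih =>
    rw [Function.iterate_succ_apply', Function.iterate_succ_apply']
    rcases ih with h | h <;> rw [h]
    · right; simp [negT]
    · left; rw [tetris_neg]; simp [negT]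

lemma negT_lip {p q : ℕ → ℤ} (h : normLe (p - q) 1) : normLe (negT p - negT q) 1 := by
  intro n
  have := h n
  simp only [Pi.sub_apply, negT, tetris, Pi.neg_apply] at this ⊢
  rw [abs_le] at this ⊢
  push_cast at this ⊢
  split_ifs <;> omega

lemma negT_iter_lip (j : ℕ) {p q : ℕ → ℤ} (h : normLe (p - q) 1) :
    normLe (negT^[j] p - negT^[j] q) 1 := by
  induction j with
  | zero => exact h
  | succ j ih =>
    rw [Function.iterate_succ_apply', Function.iterate_succ_apply']
    exact negT_lip ih

lemma exists_approx (ε : ℤ) (hε : ε = 1 ∨ ε = -1) (j : ℕ) {p p' : ℕ → ℤ}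
    (h : normLe (p + p') 1) :
    ∃ z, (z = p ∨ z = p') ∧ normLe (ε • tetris^[j] p - negT^[j] z) 1 := by
  have h1 : ε • tetris^[j] p = negT^[j] p ∨ ε • tetris^[j] p = negT^[j] (-p) := by
    rw [negT_iter_neg]
    rcases hε with rfl | rfl <;> rcases tetris_iter_eq j p with h | h <;> simp [h]
  rcases h1 with h1 | h1
  · refine ⟨p, Or.inl rfl, ?_⟩
    rw [h1]
    intro n
    simp
  · refine ⟨p', Or.inr rfl, ?_⟩
    rw [h1]
    apply negT_iter_lip
    intro n
    have := h n
    rw [← abs_neg] at this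
    simpa [sub_eq_add_neg, add_comm] using this

lemma tetris_iter_zero_at {p : ℕ → ℤ} {n : ℕ} (h : p n = 0) (j : ℕ) : tetris^[j] p n = 0 := by
  induction j with
  | zero => simpa using h
  | succ j ih => rw [Function.iterate_succ_apply']; exact tetris_zero_at ih

lemma tetris_iter_ne {j : ℕ} {p : ℕ → ℤ} {n : ℕ} (h : (j : ℤ) < |p n|) : tetris^[j] p n ≠ 0 := by
  induction j generalizing p with
  | zero => simpa using h
  | succ j ih =>
    rw [Function.iterate_succ_apply]
    apply ih
    push_cast at h
    have : |p n| ≤ |tetris p n| + 1 := by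
      simp only [tetris]
      rcases abs_cases (p n) with h | h <;> split_ifs <;> grind
    omega

lemma abs_sum_le_one {m : ℕ} (g : Fin m → ℤ) (h1 : ∀ i, |g i| ≤ 1)
    (h2 : ∀ i j, i ≠ j → g i = 0 ∨ g j = 0) : |∑ i, g i| ≤ 1 := by
  by_cases h : ∃ i, g i ≠ 0
  · obtain ⟨i, hi⟩ := h
    rw [Finset.sum_eq_single i]
    · exact h1 i
    · intro j _ hj
      exact (h2 i j (Ne.symm hj)).resolve_left hi
    · simp
  · push Not at h
    simp [h]

lemma take_ofFn_succ {d : ℕ} (Q : Fin d → ℕ → ℤ) (a : ℕ) (ha : a < d) :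
    (List.ofFn Q).take (a + 1) = (List.ofFn Q).take a ++ [Q ⟨a, ha⟩] := by
  rw [List.take_succ_eq_append_getElem (by simpa using ha)]
  simp

lemma take_ofFn_all {d : ℕ} (Q : Fin d → ℕ → ℤ) : (List.ofFn Q).take d = List.ofFn Q :=
  List.take_of_length_le (by simp)

lemma ofFn_getD {d : ℕ} (Q : Fin d → ℕ → ℤ) (a : Fin d) : (List.ofFn Q).getD a.1 0 = Q a := by
  simp [List.getD_eq_getElem?_getD]

lemma mem_ofFn_self {d : ℕ} (Q : Fin d → ℕ → ℤ) (a : Fin d) : Q a ∈ List.ofFn Q := by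
  simp [List.mem_ofFn]

/-- multi-dimensional version: for every `k, d, r ≥ 1` and every colouring
`c : FIN_{±k}^[d] → r` there are `i < r` and `P ∈ FIN_{±k}^[∞]` with
`⟨P⟩_{±k}^[d] ⊆ (c⁻¹{i})₁`. -/
theorem gowers_multidimensional (k d r : ℕ) (hk : 1 ≤ k) (hd : 1 ≤ d) (hr : 1 ≤ r)
    (c : (Fin d → ℕ → ℤ) → Fin r) :
    ∃ (i : Fin r) (P : ℕ → ℕ → ℤ), IsBlockSeq k P ∧
      ∀ Q : Fin d → ℕ → ℤ, IsBlockSeqFin k d Q → (∀ n, InSpanPM k P (Q n)) →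
        ∃ Q' : Fin d → ℕ → ℤ, IsBlockSeqFin k d Q' ∧ c Q' = i ∧
          ∀ n, normLe (Q n - Q' n) 1 := by
  obtain ⟨U, hU, hI⟩ := exists_gowersUF' k
  obtain ⟨e, rfl⟩ : ∃ e, d = e + 1 := ⟨d - 1, by omega⟩
  set X : List (ℕ → ℤ) → Fin r := fun t => c (fun i => t.getD i.1 0) with hX
  set i₀ : Fin r := colr U X (e + 1) [] with hi₀
  set G : ℕ → List (ℕ → ℤ) → Prop := fun n t => IsFinBlockSeq k t ∧ colr U X n t = i₀ with hGdef
  have hG : ∀ n t, G (n + 1) t → ∀ᶠ q in (U : Filter (ℕ → ℤ)), G n (t ++ [q]) := by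
    rintro n t ⟨h1, h2⟩
    filter_upwards [finBlockSeq_snoc hU h1, colr_succ U X n t] with q hq hq'
    exact ⟨hq, hq'.trans h2⟩
  have hstart : Good k U G (false, e, [], 0) := by
    have := hG e [] ⟨⟨by simp, by simp⟩, rfl⟩
    simpa [Good] using this
  obtain ⟨f, hf1, hf2⟩ := exists_nodes hU hI hG _ hstart
  refine ⟨i₀, fun n => (f (n + 1)).p, ⟨fun n => (hf1 _).1, fun m n hmn =>
    (hf2 (m + 1) (n + 1) (by omega) _ (Or.inl rfl)).1⟩, fun Q hQ hspan => ?_⟩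
  choose m idx ε j hmono hε hj hj0 hsum using hspan
  have hz : ∀ n i, ∃ z, (z = (f (idx n i + 1)).p ∨ z = (f (idx n i + 1)).p') ∧
      normLe (ε n i • tetris^[j n i] (f (idx n i + 1)).p - negT^[j n i] z) 1 := fun n i =>
    exists_approx _ (hε n i) _ (hf1 _).2.2.1
  choose z hz1 hz2 using hz
  -- disjointness
  have hdis : ∀ a b, a ≠ b → ∀ x, ((f a).p x = 0 ∧ (f a).p' x = 0) ∨
      ((f b).p x = 0 ∧ (f b).p' x = 0) := by
    have hlt : ∀ a b, a < b → ∀ x, ((f a).p x = 0 ∧ (f a).p' x = 0) ∨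
        ((f b).p x = 0 ∧ (f b).p' x = 0) := by
      intro a b hab x
      have h1 := hf2 a b hab _ (Or.inl rfl)
      have h2 := hf2 a b hab _ (Or.inr rfl)
      have a1 := h1.1.zero_or x
      have a2 := h1.2.1.zero_or x
      have a3 := h2.1.zero_or x
      have a4 := h2.2.1.zero_or x
      tauto
    intro a b hab x
    rcases lt_or_gt_of_ne hab with h | h
    · exact hlt a b h x
    · exact (hlt b a h x).symm
  -- peaks
  have hpeak : ∀ n, ∃ x, |(f n).p x| = (k : ℤ) := fun n => (hf1 n).1.2.2
  choose pk hpk using hpeak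
  have hpk0 : ∀ n, (f n).p (pk n) ≠ 0 := by
    intro n h0
    have := hpk n
    rw [h0] at this
    simp at this
    omega
  have hpkmono : ∀ a b, a ≤ b → pk a ≤ pk b := by
    intro a b hab
    rcases hab.lt_or_eq with h | rfl
    · exact ((hf2 a b h _ (Or.inl rfl)).1 _ _ (hpk0 a) (hpk0 b)).le
    · exact le_rfl
  have hQne : ∀ n i, Q n (pk (idx n i + 1)) ≠ 0 := by
    intro n i
    rw [hsum n, Finset.sum_apply, Finset.sum_eq_single i]
    · have h1 : tetris^[j n i] (f (idx n i + 1)).p (pk (idx n i + 1)) ≠ 0 := by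
        apply tetris_iter_ne
        rw [hpk]
        exact_mod_cast hj n i
      rcases hε n i with h | h <;> simpa [h] using h1
    · intro i' _ hi'
      have hne : idx n i' + 1 ≠ idx n i + 1 := by
        intro h
        exact hi' ((hmono n).injective (by omega))
      have := (hdis _ _ hne (pk (idx n i + 1))).resolve_right (fun h => hpk0 _ h.1)
      simp [tetris_iter_zero_at this.1]
    · simp
  have hidxlt : ∀ n n' : Fin (e + 1), n < n' → ∀ i i', idx n i < idx n' i' := by
    intro n n' hn i i'
    have h1 := hQ.2 n n' hn _ _ (hQne n i) (hQne n' i')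
    by_contra hle
    have := hpkmono (idx n' i' + 1) (idx n i + 1) (by omega)
    omega
  set Q' : Fin (e + 1) → ℕ → ℤ := fun n => ∑ i, negT^[j n i] (z n i) with hQ'
  have hrun : ∀ (n t M) (a : Fin (e + 1)), M < idx a 0 + 1 → (false, n, t, 0) ∈ (f M).S →
      (true, n, t, Q' a) ∈ (f (idx a (Fin.last _) + 1)).S ∧
      ∀ n', n = n' + 1 → (false, n', t ++ [Q' a], 0) ∈ (f (idx a (Fin.last _) + 1)).S := by
    intro n t M a hM hS
    have := run_block (k := k) f (fun m n hmn z hz => (hf2 m n hmn z hz).2.2) n t (m a)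
      (fun i => idx a i + 1) (j a) (z a) M false 0
      (fun x y hxy => Nat.add_lt_add_right (hmono a hxy) 1) hM (hj a) (hz1 a) (Or.inr (hj0 a)) hS
    simpa only [zero_add] using this
  have hmain : ∀ a (ha : a < e + 1), ∃ M, M < idx ⟨a, ha⟩ 0 + 1 ∧
      (false, e - a, (List.ofFn Q').take a, 0) ∈ (f M).S := by
    intro a
    induction a with
    | zero => intro ha; exact ⟨0, by omega, by simpa using (hf1 0).2.2.2.1⟩
    | succ a ih =>
      intro ha
      obtain ⟨M, hM, hS⟩ := ih (by omega)
      have h1 := (hrun _ _ M ⟨a, by omega⟩ hM hS).2 (e - (a + 1)) (by omega)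
      refine ⟨idx ⟨a, by omega⟩ (Fin.last _) + 1, ?_, ?_⟩
      · have := hidxlt ⟨a, by omega⟩ ⟨a + 1, ha⟩ (by simp [Fin.lt_def]) (Fin.last _) 0
        omega
      · rw [take_ofFn_succ Q' a (by omega)]
        exact h1
  obtain ⟨M, hM, hS⟩ := hmain e (by omega)
  have hfin := (hf1 _).2.2.2.2 _ (hrun _ _ M ⟨e, by omega⟩ hM hS).1
  have hG0 : G 0 (List.ofFn Q') := by
    have h1 := hfin.1
    have h2 : (List.ofFn Q').take e ++ [Q' ⟨e, by omega⟩] = List.ofFn Q' := by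
      rw [← take_ofFn_succ, take_ofFn_all]
    rw [h2, Nat.sub_self] at h1
    exact h1
  refine ⟨Q', ⟨fun n => hG0.1.1 _ (mem_ofFn_self Q' n), fun a b hab => ?_⟩, ?_, fun n x => ?_⟩
  · exact (List.pairwise_ofFn.1 hG0.1.2) hab
  · have h1 : X (List.ofFn Q') = i₀ := hG0.2
    rw [← h1]
    simp only [hX]
    congr 1
    funext a
    exact (ofFn_getD Q' a).symm
  · rw [hsum n]
    simp only [hQ', Pi.sub_apply, Finset.sum_apply, ← Finset.sum_sub_distrib]
    refine abs_sum_le_one _ (fun i => hz2 n i x) ?_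
    intro a b hab
    have hne : idx n a + 1 ≠ idx n b + 1 := by
      intro h
      exact hab ((hmono n).injective (by omega))
    have hzero : ∀ i, ((f (idx n i + 1)).p x = 0 ∧ (f (idx n i + 1)).p' x = 0) →
        (ε n i • tetris^[j n i] (f (idx n i + 1)).p) x - negT^[j n i] (z n i) x = 0 := by
      intro i hi
      have hzx : z n i x = 0 := by
        rcases hz1 n i with h | h <;> rw [h]
        · exact hi.1
        · exact hi.2
      simp [tetris_iter_zero_at hi.1, negT_iter_zero_at hzx]
    exact (hdis _ _ hne x).imp (hzero a) (hzero b)
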